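/- arXiv:2503.20319 — 4 statements merged into one kernel-verified Lean document; each statement's English description precedes it below -/
import Mathlib

section
/- Let n, q be positive integers, let Ē, A : Matrix (Fin n) (Fin n) ℂ and Ξ : Matrix (Fin q) (Fin q) ℂ. Assume that for every eigenvalue λ of Ξ (i.e., every λ in the spectrum of Ξ over ℂ) the matrix λ • Ē − A is invertible. Then the homogeneous generalized Sylvester equation has only the trivial solution: every X : Matrix (Fin n) (Fin q) ℂ satisfying Ē * X * Ξ = A * X is the zero matrix. -/
/-!
The equation `E X Ξ = A X` gives `(μ E - A) X = -E X (Ξ - μ)` for every scalar `μ`. Hence, if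
`μ E - A` is injective, `X (Ξ - μ) v = 0` forces `X v = 0`. Cancelling the linear factors of the
characteristic polynomial `p` of `Ξ` one at a time, `X p(Ξ) v = 0` forces `X v = 0`, and
`p(Ξ) = 0` by Cayley–Hamilton.
-/

open scoped Polynomial

section LinearMap

variable {R U V W : Type*} [CommRing R] [AddCommGroup U] [Module R U] [AddCommGroup V] [Module R V]
  [AddCommGroup W] [Module R W] {E A : V →ₗ[R] W} {X : U →ₗ[R] V} {f : Module.End R U}

lemma sylvester_pencil_apply_eq_neg (hX : E ∘ₗ X ∘ₗ f = A ∘ₗ X) (μ : R) (u : U) :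
    (μ • E - A) (X u) = -E (X ((f - algebraMap R _ μ) u)) := by
  have hu : E (X (f u)) = A (X u) := LinearMap.congr_fun hX u
  simp only [LinearMap.sub_apply, LinearMap.smul_apply, Module.algebraMap_end_apply, map_sub,
    map_smul, hu, neg_sub]

lemma sylvester_apply_eq_zero_of_apply_sub_eq_zero (hX : E ∘ₗ X ∘ₗ f = A ∘ₗ X) {μ : R}
    (hμ : Function.Injective (μ • E - A)) {u : U} (hu : X ((f - algebraMap R _ μ) u) = 0) :
    X u = 0 := by
  apply (map_eq_zero_iff _ hμ).1
  rw [sylvester_pencil_apply_eq_neg hX, hu, map_zero, neg_zero]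

lemma sylvester_apply_eq_zero_of_apply_aeval_prod_eq_zero (hX : E ∘ₗ X ∘ₗ f = A ∘ₗ X)
    {s : Multiset R} (hs : ∀ μ ∈ s, Function.Injective (μ • E - A)) {u : U}
    (hu : X (Polynomial.aeval f (s.map fun μ ↦ (.X - .C μ : R[X])).prod u) = 0) : X u = 0 := by
  induction s using Multiset.induction with
  | empty => simpa using hu
  | cons μ s ih =>
    rw [Multiset.forall_mem_cons] at hs
    refine ih hs.2 (sylvester_apply_eq_zero_of_apply_sub_eq_zero hX hs.1 ?_)
    simpa only [Multiset.map_cons, Multiset.prod_cons, map_mul, map_sub, Polynomial.aeval_X,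
      Polynomial.aeval_C, Module.End.mul_apply] using hu

theorem sylvester_eq_zero_of_aeval_eq_zero [IsDomain R] (hX : E ∘ₗ X ∘ₗ f = A ∘ₗ X) {p : R[X]}
    (hp : p.Monic) (hsplits : p.Splits) (hpf : Polynomial.aeval f p = 0)
    (hroots : ∀ μ ∈ p.roots, Function.Injective (μ • E - A)) : X = 0 := by
  ext u
  apply sylvester_apply_eq_zero_of_apply_aeval_prod_eq_zero hX hroots
  rw [← hsplits.eq_prod_roots_of_monic hp, hpf, LinearMap.zero_apply, map_zero]

end LinearMap

theorem stmt_0_general {R m n q : Type*} [CommRing R] [IsDomain R] [Fintype n] [Fintype q]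
    [DecidableEq q] {E A : Matrix m n R} {Ξ : Matrix q q R} (hΞ : Ξ.charpoly.Splits)
    (h : ∀ μ, Ξ.charpoly.IsRoot μ → Function.Injective (μ • E - A).mulVec)
    {X : Matrix n q R} (hX : E * X * Ξ = A * X) : X = 0 := by
  classical
  have hlin : E.toLin' ∘ₗ X.toLin' ∘ₗ Ξ.toLin' = A.toLin' ∘ₗ X.toLin' := by
    simp only [← Matrix.toLin'_mul, ← Matrix.mul_assoc, hX]
  have hroots (μ : R) (hμ : μ ∈ Ξ.charpoly.roots) :
      Function.Injective (μ • E.toLin' - A.toLin') := by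
    rw [← map_smul, ← map_sub]
    exact h μ (Polynomial.isRoot_of_mem_roots hμ)
  have hcayley : Polynomial.aeval Ξ.toLin' Ξ.charpoly = 0 := by
    rw [← Matrix.charpoly_toLin', LinearMap.aeval_self_charpoly]
  exact Matrix.toLin'.map_eq_zero_iff.1
    (sylvester_eq_zero_of_aeval_eq_zero hlin Ξ.charpoly_monic hΞ hcayley hroots)

/-- If every eigenvalue `λ` of `Ξ` makes `λ • Ē − A` invertible, then the
homogeneous generalized Sylvester equation `Ē * X * Ξ = A * X` has only the trivial
solution. -/
theorem stmt_0 (n q : ℕ) (hn : 0 < n) (hq : 0 < q)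
    (Ebar A : Matrix (Fin n) (Fin n) ℂ) (Ξ : Matrix (Fin q) (Fin q) ℂ)
    (h : ∀ lam ∈ spectrum ℂ Ξ, IsUnit (lam • Ebar - A)) :
    ∀ X : Matrix (Fin n) (Fin q) ℂ, Ebar * X * Ξ = A * X → X = 0 := fun _ ↦
  stmt_0_general (IsAlgClosed.splits _) fun μ hμ ↦
    Matrix.mulVec_injective_of_isUnit (h μ (Matrix.mem_spectrum_of_isRoot_charpoly hμ))
end

section
/- Let n, q be positive integers, let Ē, A : Matrix (Fin n) (Fin n) ℂ, Ξ : Matrix (Fin q) (Fin q) ℂ, and B : Matrix (Fin n) (Fin q) ℂ. Assume that for every eigenvalue λ of Ξ over ℂ the matrix λ • Ē − A is invertible. Then there exists a unique X : Matrix (Fin n) (Fin q) ℂ such that A * X + B = Ē * X * Ξ. -/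
/-!
Multiplication by `Ē` or `A` on the left commutes with multiplication by `Ξ` on the right, so the
kernel of `X ↦ Ē X Ξ - A X` is stable under `X ↦ X Ξ`. If it were nonzero, it would contain an
eigenvector, `X ≠ 0` with `X Ξ = μ X`. Then `X (μ - Ξ) = 0` makes `μ` an eigenvalue of `Ξ`, while
`(μ Ē - A) X = 0` contradicts the invertibility of `μ Ē - A`. In finite dimension the trivial
kernel gives bijectivity.
-/

section CommutingEndomorphisms

theorem ker_mem_invtSubmodule_of_commute {R M : Type*} [Semiring R] [AddCommMonoid M] [Module R M]
    {f g : Module.End R M} (h : Commute f g) : LinearMap.ker f ∈ g.invtSubmodule := by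
  intro x hx
  rw [LinearMap.mem_ker] at hx
  rw [Submodule.mem_comap, LinearMap.mem_ker, ← Module.End.mul_apply, h.eq, Module.End.mul_apply,
    hx, map_zero]

variable {K V : Type*} [Field K] [IsAlgClosed K] [AddCommGroup V] [Module K V]

theorem exists_hasEigenvector_mem_of_mem_invtSubmodule {f : Module.End K V} {p : Submodule K V}
    [FiniteDimensional K p] (hf : p ∈ f.invtSubmodule) (hp : p ≠ ⊥) :
    ∃ μ, ∃ x ∈ p, f.HasEigenvector μ x := by
  have : Nontrivial p := Submodule.nontrivial_iff_ne_bot.mpr hp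
  obtain ⟨μ, hμ⟩ := Module.End.exists_eigenvalue (f.restrict hf)
  obtain ⟨x, hx⟩ := hμ.exists_hasEigenvector
  refine ⟨μ, x, x.2, Module.End.hasEigenvector_iff.mpr ⟨?_, ?_⟩⟩
  · exact Module.End.mem_eigenspace_iff.mpr (congrArg Subtype.val hx.apply_eq_smul)
  · exact fun hx_zero ↦ hx.2 (Subtype.ext hx_zero)

theorem isUnit_mul_sub_of_commute [FiniteDimensional K V] {e a r : Module.End K V}
    (he : Commute e r) (ha : Commute a r) (h : ∀ μ ∈ spectrum K r, IsUnit (μ • e - a)) :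
    IsUnit (e * r - a) := by
  rw [LinearMap.isUnit_iff_ker_eq_bot]
  by_contra hker
  have hcomm : Commute (e * r - a) r := (he.mul_left (Commute.refl r)).sub_left ha
  obtain ⟨μ, x, hx, hev⟩ :=
    exists_hasEigenvector_mem_of_mem_invtSubmodule (ker_mem_invtSubmodule_of_commute hcomm) hker
  have hμ : μ ∈ spectrum K r := (Module.End.hasEigenvalue_of_hasEigenvector hev).mem_spectrum
  have hpencil : (μ • e - a) x = 0 := by
    simpa [hev.apply_eq_smul] using hx
  have hpencil_ker : LinearMap.ker (μ • e - a) = ⊥ :=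
    (LinearMap.isUnit_iff_ker_eq_bot _).mp (h μ hμ)
  exact hev.2 (LinearMap.ker_eq_bot'.mp hpencil_ker x hpencil)

end CommutingEndomorphisms

section MatrixMultiplication

theorem isUnit_mulLeftLinearMap {R S m n : Type*} [Semiring R] [Semiring S] [Module R S]
    [SMulCommClass R S S] [Fintype m] [DecidableEq m] {A : Matrix m m S} (hA : IsUnit A) :
    IsUnit (mulLeftLinearMap n R A : Module.End R (Matrix m n S)) := by
  obtain ⟨C, hAC, hCA⟩ := isUnit_iff_exists.mp hA
  refine isUnit_iff_exists.mpr ⟨mulLeftLinearMap n R C, ?_, ?_⟩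
  · rw [Module.End.mul_eq_comp, ← mulLeftLinearMap_mul, hAC, mulLeftLinearMap_one,
      Module.End.one_eq_id]
  · rw [Module.End.mul_eq_comp, ← mulLeftLinearMap_mul, hCA, mulLeftLinearMap_one,
      Module.End.one_eq_id]

theorem isUnit_mulRightLinearMap {R S m n : Type*} [Semiring R] [Semiring S] [Module R S]
    [IsScalarTower R S S] [Fintype n] [DecidableEq n] {A : Matrix n n S} (hA : IsUnit A) :
    IsUnit (mulRightLinearMap m R A : Module.End R (Matrix m n S)) := by
  obtain ⟨C, hAC, hCA⟩ := isUnit_iff_exists.mp hA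
  refine isUnit_iff_exists.mpr ⟨mulRightLinearMap m R C, ?_, ?_⟩
  · rw [Module.End.mul_eq_comp, ← mulRightLinearMap_mul, hCA, mulRightLinearMap_one,
      Module.End.one_eq_id]
  · rw [Module.End.mul_eq_comp, ← mulRightLinearMap_mul, hAC, mulRightLinearMap_one,
      Module.End.one_eq_id]

theorem spectrum_mulRightLinearMap_subset {R S m n : Type*} [CommRing R] [Ring S] [Algebra R S]
    [Fintype n] [DecidableEq n] (A : Matrix n n S) :
    spectrum R (mulRightLinearMap m R A : Module.End R (Matrix m n S)) ⊆ spectrum R A := by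
  intro μ hμ
  rw [spectrum.mem_iff] at hμ ⊢
  have hresolvent : (mulRightLinearMap m R (algebraMap R (Matrix n n S) μ - A) :
      Module.End R (Matrix m n S)) = algebraMap R _ μ - mulRightLinearMap m R A := by
    ext1 X
    simp [Algebra.algebraMap_eq_smul_one, Matrix.mul_sub]
  rw [← hresolvent] at hμ
  exact mt isUnit_mulRightLinearMap hμ

end MatrixMultiplication

theorem stmt_1_general {K m n : Type*} [Field K] [IsAlgClosed K] [Fintype m] [DecidableEq m]
    [Fintype n] [DecidableEq n] (E A : Matrix m m K) (Ξ : Matrix n n K) (B : Matrix m n K)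
    (h : ∀ μ ∈ spectrum K Ξ, IsUnit (μ • E - A)) :
    ∃! X : Matrix m n K, A * X + B = E * X * Ξ := by
  let e : Module.End K (Matrix m n K) := mulLeftLinearMap n K E
  let a : Module.End K (Matrix m n K) := mulLeftLinearMap n K A
  let r : Module.End K (Matrix m n K) := mulRightLinearMap m K Ξ
  have hpencil : ∀ μ ∈ spectrum K r, IsUnit (μ • e - a) := by
    intro μ hμ
    have hleft : μ • e - a = mulLeftLinearMap n K (μ • E - A) := by
      ext1 X
      simp [e, a, Matrix.sub_mul]
    rw [hleft]
    exact isUnit_mulLeftLinearMap (h μ (spectrum_mulRightLinearMap_subset Ξ hμ))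
  have hunit : IsUnit (e * r - a) :=
    isUnit_mul_sub_of_commute (commute_mulLeftLinearMap_mulRightLinearMap E Ξ)
      (commute_mulLeftLinearMap_mulRightLinearMap A Ξ) hpencil
  have hiff (X : Matrix m n K) : A * X + B = E * X * Ξ ↔ (e * r - a) X = B := by
    have happly : (e * r - a) X = E * X * Ξ - A * X := by
      simp [e, a, r, Matrix.mul_assoc]
    rw [happly, sub_eq_iff_eq_add', eq_comm]
  simpa only [hiff] using ((Module.End.isUnit_iff _).mp hunit).existsUnique B

/-- If every eigenvalue `λ` of `Ξ` makes `λ • Ē − A` invertible, then the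
generalized Sylvester equation `A * X + B = Ē * X * Ξ` has a unique solution. -/
theorem stmt_1 (n q : ℕ) (hn : 0 < n) (hq : 0 < q)
    (Ebar A : Matrix (Fin n) (Fin n) ℂ) (Ξ : Matrix (Fin q) (Fin q) ℂ)
    (B : Matrix (Fin n) (Fin q) ℂ)
    (h : ∀ lam ∈ spectrum ℂ Ξ, IsUnit (lam • Ebar - A)) :
    ∃! X : Matrix (Fin n) (Fin q) ℂ, A * X + B = Ebar * X * Ξ :=
  stmt_1_general Ebar A Ξ B h
end

section
/- Let n, q be positive integers, λ : Fin q → ℂ with (λ j) • Ē − A invertible for every j, let Ē, A : Matrix (Fin n) (Fin n) ℂ, B : Matrix (Fin n) (Fin m) ℂ, Π : Matrix (Fin m) (Fin q) ℂ, C : Matrix (Fin p) (Fin n) ℂ, D : Matrix (Fin p) (Fin m) ℂ. If X : Matrix (Fin n) (Fin q) ℂ satisfies A * X + B * Π = Ē * X * (Matrix.diagonal λ), then for every j the j-th column of C * X + D * Π equals (C * ((λ j) • Ē − A)⁻¹ * B + D).mulVec (column j of Π), i.e., it equals the right tangential interpolation H(λ j) π_j of the transfer function H(s) = C(sĒ −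 A)⁻¹B + D at the point λ j along the direction π_j given by the j-th column of Π. -/
/-!
Because the input generator is diagonal, the Sylvester equation decouples into columns:
`A x_j + B π_j = λ_j Ē x_j`, that is `(λ_j Ē - A) x_j = B π_j`. Invertibility of the pencil at `λ_j`
gives `x_j = (λ_j Ē - A)⁻¹ B π_j`, and substituting this into `C x_j + D π_j` yields `H(λ_j) π_j`.
-/

section

open Matrix

variable {R l n m p q : Type*}

section Columns

theorem col_mul [NonUnitalNonAssocSemiring R] [Fintype n]
    (M : Matrix l n R) (N : Matrix n q R) (j : q) : (M * N).col j = M *ᵥ N.col j :=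
  rfl

theorem col_add [Add R] (M N : Matrix l q R) (j : q) :
    (M + N).col j = M.col j + N.col j :=
  rfl

variable [NonUnitalNonAssocCommSemiring R] [Fintype q] [DecidableEq q]

theorem col_mul_diagonal (M : Matrix l q R) (d : q → R) (j : q) :
    (M * diagonal d).col j = d j • M.col j := by
  ext i
  simp only [col_apply, mul_diagonal, Pi.smul_apply, smul_eq_mul, mul_comm]

theorem mulVec_col_add_mulVec_col_of_sylvester [Fintype n] [Fintype m] {lam : q → R}
    {E A : Matrix l n R} {B : Matrix l m R} {P : Matrix m q R} {X : Matrix n q R}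
    (hX : A * X + B * P = E * X * diagonal lam) (j : q) :
    A *ᵥ X.col j + B *ᵥ P.col j = lam j • (E *ᵥ X.col j) :=
  calc
    A *ᵥ X.col j + B *ᵥ P.col j = (A * X + B * P).col j := by
      rw [col_add, col_mul, col_mul]
    _ = (E * X * diagonal lam).col j := by rw [hX]
    _ = lam j • (E *ᵥ X.col j) := by rw [col_mul_diagonal, col_mul]

end Columns

variable [CommRing R] [Fintype n] [DecidableEq n] [Fintype m]

/-- The transfer function `H(s) = C (s E - A)⁻¹ B + D` of the descriptor system
`E x' = A x + B u`, `y = C x + D u`. The inverse is `Matrix.inv`, so the value is `D` at points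
where the pencil `s E - A` is not invertible. -/
noncomputable def descriptorTransferFunction (E A : Matrix n n R) (B : Matrix n m R)
    (C : Matrix p n R) (D : Matrix p m R) (s : R) : Matrix p m R :=
  C * (s • E - A)⁻¹ * B + D

theorem eq_pencil_inv_mulVec {E A : Matrix n n R} {s : R} {x b : n → R}
    (hs : IsUnit (s • E - A)) (hx : A *ᵥ x + b = s • (E *ᵥ x)) :
    x = (s • E - A)⁻¹ *ᵥ b := by
  obtain ⟨_⟩ := hs.nonempty_invertible
  have hb : b = (s • E - A) *ᵥ x := by
    rw [sub_mulVec, smul_mulVec, ← hx, add_sub_cancel_left]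
  exact (inv_mulVec_eq_vec hb).symm

theorem output_eq_descriptorTransferFunction_mulVec {E A : Matrix n n R} {B : Matrix n m R}
    {s : R} {x : n → R} {u : m → R} (C : Matrix p n R) (D : Matrix p m R)
    (hs : IsUnit (s • E - A)) (hx : A *ᵥ x + B *ᵥ u = s • (E *ᵥ x)) :
    C *ᵥ x + D *ᵥ u = descriptorTransferFunction E A B C D s *ᵥ u :=
  calc
    C *ᵥ x + D *ᵥ u = C *ᵥ ((s • E - A)⁻¹ *ᵥ (B *ᵥ u)) + D *ᵥ u := by
      rw [← eq_pencil_inv_mulVec hs hx]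
    _ = descriptorTransferFunction E A B C D s *ᵥ u := by
      simp only [descriptorTransferFunction, add_mulVec, mulVec_mulVec, Matrix.mul_assoc]

theorem stmt_4_general [Fintype q] [DecidableEq q] {lam : q → R} {E A : Matrix n n R}
    {B : Matrix n m R} {P : Matrix m q R} (C : Matrix p n R) (D : Matrix p m R)
    {X : Matrix n q R} (hX : A * X + B * P = E * X * diagonal lam)
    {j : q} (hj : IsUnit (lam j • E - A)) :
    (C * X + D * P).col j = descriptorTransferFunction E A B C D (lam j) *ᵥ P.col j := by
  rw [col_add, col_mul, col_mul]
  exact output_eq_descriptorTransferFunction_mulVec C D hj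
    (mulVec_col_add_mulVec_col_of_sylvester hX j)

end

/-- Corollary 1: If `X` solves the Sylvester equation
`A * X + B * Π = Ē * X * diagonal λ`, then the `j`-th column of the steady-state
response matrix `C * X + D * Π` equals the right tangential interpolation
`H(λ j) π_j = (C ((λ j) Ē − A)⁻¹ B + D) π_j`, where `π_j` is the `j`-th column of `Π`. -/
theorem stmt_4 (n q m p : ℕ) (hn : 0 < n) (hq : 0 < q) (lam : Fin q → ℂ)
    (Ebar A : Matrix (Fin n) (Fin n) ℂ)
    (B : Matrix (Fin n) (Fin m) ℂ) (Pi : Matrix (Fin m) (Fin q) ℂ)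
    (C : Matrix (Fin p) (Fin n) ℂ) (D : Matrix (Fin p) (Fin m) ℂ)
    (h : ∀ j, IsUnit (lam j • Ebar - A))
    (X : Matrix (Fin n) (Fin q) ℂ)
    (hX : A * X + B * Pi = Ebar * X * Matrix.diagonal lam) :
    ∀ j, (fun i => (C * X + D * Pi) i j)
      = (C * (lam j • Ebar - A)⁻¹ * B + D).mulVec (fun i => Pi i j) :=
  fun j => stmt_4_general C D hX (h j)
end

section
/- Let M, k be positive integers, Ψ : Matrix (Fin M) (Fin k) ℝ, and s > 0 such that for every x : Fin k → ℝ, the Euclidean norms satisfy s · ‖x‖ ≤ ‖Ψ.mulVec x‖. Then Ψᵀ * Ψ is invertible, and for every κ : Fin M → ℝ and every θ : Fin k → ℝ, ‖ ((Ψᵀ * Ψ)⁻¹ * Ψᵀ).mulVec κ − θ ‖ ≤ ‖ κ − Ψ.mulVec θ ‖ / s, where all norms are Euclidean (ℓ²) norms. -/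
/-!
The residual `b - A θ̂` of the least-squares solution is orthogonal to the range of `A`. Hence
`A (θ̂ - x)` is the orthogonal projection of `b - A x` onto that range and is no longer than
`b - A x`, and the lower bound `s * ‖θ̂ - x‖ ≤ ‖A (θ̂ - x)‖` turns this into the estimate.
-/

/-- Euclidean (ℓ²) norm of a finite real vector. -/
noncomputable def euclNorm {d : ℕ} (v : Fin d → ℝ) : ℝ := Real.sqrt (∑ i, (v i) ^ 2)

open Function Matrix WithLp
open scoped ComplexOrder InnerProductSpace

theorem injective_of_mul_norm_le_norm {𝓕 E F : Type*} [NormedAddGroup E] [SeminormedAddGroup F]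
    [FunLike 𝓕 E F] [AddMonoidHomClass 𝓕 E F] (f : 𝓕) {s : ℝ} (hs : 0 < s)
    (hf : ∀ x, s * ‖x‖ ≤ ‖f x‖) : Injective f := by
  refine (injective_iff_map_eq_zero f).2 fun x hx => norm_le_zero_iff.1 ?_
  have hsx : s * ‖x‖ ≤ 0 := by simpa only [hx, norm_zero] using hf x
  exact nonpos_of_mul_nonpos_right hsx hs

theorem norm_le_norm_of_inner_sub_eq_zero {𝕜 E : Type*} [RCLike 𝕜] [SeminormedAddCommGroup E]
    [InnerProductSpace 𝕜 E] {p r : E} (h : ⟪p, r - p⟫_𝕜 = 0) : ‖p‖ ≤ ‖r‖ := by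
  have pythagoras := norm_add_sq_eq_norm_sq_add_norm_sq_of_inner_eq_zero p (r - p) h
  rw [add_sub_cancel] at pythagoras
  refine (mul_self_le_mul_self_iff (norm_nonneg p) (norm_nonneg r)).2 ?_
  exact pythagoras ▸ le_add_of_nonneg_right (mul_self_nonneg _)

/-- The least-squares solution `(Aᴴ A)⁻¹ Aᴴ b` of the linear system `A x = b`. If `Aᴴ A` is not
invertible, its inverse and hence `leastSquares A b` is `0`. -/
noncomputable def leastSquares {m n R : Type*} [Fintype m] [Fintype n] [DecidableEq n]
    [CommRing R] [StarRing R] (A : Matrix m n R) (b : m → R) : n → R :=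
  ((Aᴴ * A)⁻¹ * Aᴴ) *ᵥ b

section LeastSquares

variable {m n 𝕜 : Type*} [Fintype m] [Fintype n] [RCLike 𝕜] {A : Matrix m n 𝕜}

theorem inner_mulVec_eq_zero_of_conjTranspose_mulVec_eq_zero {w : m → 𝕜} (hw : Aᴴ *ᵥ w = 0)
    (x : n → 𝕜) : ⟪toLp 2 (A *ᵥ x), toLp 2 w⟫_𝕜 = 0 := by
  rw [EuclideanSpace.inner_toLp_toLp, dotProduct_comm, star_mulVec, ← dotProduct_mulVec, hw,
    dotProduct_zero]

variable [DecidableEq n]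

theorem conjTranspose_mulVec_sub_mulVec_leastSquares {R : Type*} [CommRing R] [StarRing R]
    {A : Matrix m n R} (hA : IsUnit (Aᴴ * A)) (b : m → R) :
    Aᴴ *ᵥ (b - A *ᵥ leastSquares A b) = 0 := by
  rw [leastSquares, mulVec_sub, mulVec_mulVec, mulVec_mulVec, ← Matrix.mul_assoc,
    mul_nonsing_inv _ ((isUnit_iff_isUnit_det _).1 hA), Matrix.one_mul, sub_self]

theorem norm_mulVec_leastSquares_sub_le (hA : IsUnit (Aᴴ * A)) (b : m → 𝕜) (x : n → 𝕜) :
    ‖toLp 2 (A *ᵥ (leastSquares A b - x))‖ ≤ ‖toLp 2 (b - A *ᵥ x)‖ := by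
  refine norm_le_norm_of_inner_sub_eq_zero (𝕜 := 𝕜) ?_
  have residual_eq :
      b - A *ᵥ x - A *ᵥ (leastSquares A b - x) = b - A *ᵥ leastSquares A b := by
    rw [mulVec_sub, sub_sub_sub_cancel_right]
  rw [← toLp_sub, residual_eq]
  exact inner_mulVec_eq_zero_of_conjTranspose_mulVec_eq_zero
    (conjTranspose_mulVec_sub_mulVec_leastSquares hA b) _

theorem isUnit_conjTranspose_mul_self_of_mul_norm_le {s : ℝ} (hs : 0 < s)
    (hA : ∀ x : n → 𝕜, s * ‖toLp 2 x‖ ≤ ‖toLp 2 (A *ᵥ x)‖) : IsUnit (Aᴴ * A) := by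
  have toEuclideanLin_injective : Injective A.toEuclideanLin :=
    injective_of_mul_norm_le_norm _ hs fun x => hA (ofLp x)
  have mulVec_injective : Injective A.mulVec := fun x y hxy =>
    toLp_injective 2 (toEuclideanLin_injective (congrArg (toLp 2) hxy))
  exact (PosDef.conjTranspose_mul_self A mulVec_injective).isUnit

theorem stmt_12_general {s : ℝ} (hs : 0 < s)
    (hA : ∀ x : n → 𝕜, s * ‖toLp 2 x‖ ≤ ‖toLp 2 (A *ᵥ x)‖) :
    IsUnit (Aᴴ * A) ∧ ∀ (b : m → 𝕜) (x : n → 𝕜),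
      ‖toLp 2 (leastSquares A b - x)‖ ≤ ‖toLp 2 (b - A *ᵥ x)‖ / s := by
  have hunit := isUnit_conjTranspose_mul_self_of_mul_norm_le hs hA
  refine ⟨hunit, fun b x => (le_div_iff₀' hs).2 ?_⟩
  exact (hA _).trans (norm_mulVec_leastSquares_sub_le hunit b x)

end LeastSquares

theorem euclNorm_eq_norm_toLp {d : ℕ} (v : Fin d → ℝ) : euclNorm v = ‖toLp 2 v‖ := by
  simp only [euclNorm, EuclideanSpace.norm_eq, Real.norm_eq_abs, sq_abs]

/-- least-squares error bound, inequality (24): if the smallest singular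
value of `Ψ` is at least `s > 0` (i.e. `s‖x‖ ≤ ‖Ψx‖` for all `x`, in Euclidean norms),
then `ΨᵀΨ` is invertible and the least-squares estimate `θ̂ = (ΨᵀΨ)⁻¹Ψᵀκ` deviates from
any reference `θ` by at most `‖κ − Ψθ‖ / s`. -/
theorem stmt_12 (M k : ℕ) (hM : 0 < M) (hk : 0 < k)
    (Ψ : Matrix (Fin M) (Fin k) ℝ) (s : ℝ) (hs : 0 < s)
    (hsing : ∀ x : Fin k → ℝ, s * euclNorm x ≤ euclNorm (Ψ.mulVec x)) :
    IsUnit (Ψ.transpose * Ψ) ∧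
      ∀ (κ : Fin M → ℝ) (θ : Fin k → ℝ),
        euclNorm (((Ψ.transpose * Ψ)⁻¹ * Ψ.transpose).mulVec κ - θ)
          ≤ euclNorm (κ - Ψ.mulVec θ) / s := by
  simp only [euclNorm_eq_norm_toLp, ← conjTranspose_eq_transpose_of_trivial] at hsing ⊢
  exact stmt_12_general hs hsing
end
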